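/- Let ρ : S² → S² be a continuous map of degree k ≥ 2. If there exist two distinct points p₁ ≠ p₂ in S² such that each fiber ρ⁻¹(pᵢ) consists of a single point, then for every q ∈ S² \ {p₁, p₂} the fiber ρ⁻¹(q) has at least k elements. In particular, the set of points with a singleton fiber has at most two elements. -/

import Mathlib

open scoped Topology Topology.Homotopy unitInterval

noncomputable section

/-- The 2-sphere `S²`, as the unit sphere in Euclidean 3-space. -/
abbrev Sphere2 : Type := Metric.sphere (0 : EuclideanSpace ℝ (Fin 3)) 1

/-- The map induced by a continuous map `ρ` on second homotopy groups,
`π₂(X, b) → π₂(Y, ρ b)`, given by postcomposition. -/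
noncomputable def piTwoMap {X Y : Type*} [TopologicalSpace X] [TopologicalSpace Y]
    (ρ : C(X, Y)) (b : X) :
    HomotopyGroup (Fin 2) X b → HomotopyGroup (Fin 2) Y (ρ b) :=
  Quotient.map
    (fun p => ⟨ρ.comp p.1, fun y hy => by
      simp only [ContinuousMap.comp_apply]
      rw [p.2 y hy]⟩)
    (fun p q h => by
      obtain ⟨H⟩ := h
      exact ⟨H.compContinuousMap ρ⟩)

/-- A continuous self-map `ρ` of `S²` has degree `k` if the induced map on
`π₂(S²) ≅ H₂(S²; ℤ) ≅ ℤ` is multiplication by `k` (written multiplicatively,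
`γ ↦ γ ^ k`). -/
def HasDegree (ρ : C(Sphere2, Sphere2)) (k : ℤ) : Prop :=
  ∃ (b : Sphere2) (e : HomotopyGroup (Fin 2) Sphere2 b ≃* Multiplicative ℤ)
    (e' : HomotopyGroup (Fin 2) Sphere2 (ρ b) ≃* Multiplicative ℤ),
    ∀ γ : HomotopyGroup (Fin 2) Sphere2 b, e' (piTwoMap ρ b γ) = (e γ) ^ k

/-! ### Induced maps on second homotopy groups -/

abbrev Pi2 (X : Type*) [TopologicalSpace X] (x : X) := HomotopyGroup (Fin 2) X x

def mk2 {X : Type*} [TopologicalSpace X] {x : X} (p : GenLoop (Fin 2) X x) : Pi2 X x :=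
  Quotient.mk _ p

theorem mk2_eq {X : Type*} [TopologicalSpace X] {x : X} {p q : GenLoop (Fin 2) X x}
    (K : I × (Fin 2 → I) → X) (hK : Continuous K) (h0 : ∀ y, K (0, y) = p y)
    (h1 : ∀ y, K (1, y) = q y) (hb : ∀ u, ∀ y ∈ Cube.boundary (Fin 2), K (u, y) = x) :
    mk2 p = mk2 q := by
  refine Quotient.sound ⟨⟨⟨⟨K, hK⟩, h0, h1⟩, ?_⟩⟩
  intro u y hy
  exact (hb u y hy).trans (p.2 y hy).symm

theorem mk2_surj {X : Type*} [TopologicalSpace X] {x : X} (γ : Pi2 X x) : ∃ p, mk2 p = γ :=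
  Quotient.exists_rep γ

theorem mk2_mul {X : Type*} [TopologicalSpace X] {x : X} (p q : GenLoop (Fin 2) X x) :
    mk2 p * mk2 q = mk2 (GenLoop.transAt 0 q p) :=
  HomotopyGroup.mul_spec

def lmap {X Y : Type*} [TopologicalSpace X] [TopologicalSpace Y] (f : C(X, Y)) {x : X} {y : Y}
    (h : f x = y) (p : GenLoop (Fin 2) X x) : GenLoop (Fin 2) Y y :=
  ⟨f.comp p.1, fun z hz => by simp only [ContinuousMap.comp_apply]; rw [p.2 z hz, h]⟩

theorem lmap_apply {X Y : Type*} [TopologicalSpace X] [TopologicalSpace Y] (f : C(X, Y)) {x : X}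
    {y : Y} (h : f x = y) (p : GenLoop (Fin 2) X x) (z) : lmap f h p z = f (p z) := rfl

def pmap {X Y : Type*} [TopologicalSpace X] [TopologicalSpace Y] (f : C(X, Y)) {x : X} {y : Y}
    (h : f x = y) : Pi2 X x →* Pi2 Y y :=
  MonoidHom.mk' (Quotient.map (lmap f h) (fun p q hpq => by
      obtain ⟨H⟩ := hpq
      exact ⟨H.compContinuousMap f⟩)) (by
    intro a b
    obtain ⟨p, rfl⟩ := mk2_surj a
    obtain ⟨q, rfl⟩ := mk2_surj b
    rw [mk2_mul]
    change mk2 (lmap f h _) = mk2 (lmap f h p) * mk2 (lmap f h q)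
    rw [mk2_mul]
    congr 1
    ext z
    rw [lmap_apply]
    simp only [GenLoop.transAt, GenLoop.coe_copy]
    split_ifs <;> rfl)

theorem pmap_mk {X Y : Type*} [TopologicalSpace X] [TopologicalSpace Y] (f : C(X, Y)) {x : X}
    {y : Y} (h : f x = y) (p : GenLoop (Fin 2) X x) : pmap f h (mk2 p) = mk2 (lmap f h p) := rfl

theorem pmap_pmap {X Y Z : Type*} [TopologicalSpace X] [TopologicalSpace Y] [TopologicalSpace Z]
    (f : C(X, Y)) (g : C(Y, Z)) {x : X} {y : Y} {z : Z} (h : f x = y) (h' : g y = z)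
    (h'' : (g.comp f) x = z) (γ : Pi2 X x) :
    pmap g h' (pmap f h γ) = pmap (g.comp f) h'' γ := by
  obtain ⟨p, rfl⟩ := mk2_surj γ
  rfl

theorem pmap_id {X : Type*} [TopologicalSpace X] {x : X} (γ : Pi2 X x) (f : C(X, X))
    (hf : ∀ x, f x = x) : pmap f (hf x) γ = γ := by
  obtain ⟨p, rfl⟩ := mk2_surj γ
  rw [pmap_mk]
  congr 1
  ext z
  rw [lmap_apply, hf]

theorem pmap_homotopy {X Y : Type*} [TopologicalSpace X] [TopologicalSpace Y] (f g : C(X, Y))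
    {x : X} {y : Y} (h : f x = y) (h' : g x = y) (F : C(I × X, Y)) (h0 : ∀ z, F (0, z) = f z)
    (h1 : ∀ z, F (1, z) = g z) (hb : ∀ u, F (u, x) = y) (γ : Pi2 X x) :
    pmap f h γ = pmap g h' γ := by
  obtain ⟨p, rfl⟩ := mk2_surj γ
  rw [pmap_mk, pmap_mk]
  refine mk2_eq (fun v => F (v.1, p v.2)) ?_ ?_ ?_ ?_
  · have : Continuous p := p.1.continuous
    fun_prop
  · intro y; exact h0 _
  · intro y; exact h1 _
  · intro u y hy
    have hp : p y = x := p.2 y hy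
    simp only
    rw [hp]
    exact hb u

def pequiv {X Y : Type*} [TopologicalSpace X] [TopologicalSpace Y] (f : X ≃ₜ Y) {x : X} {y : Y}
    (h : f x = y) : Pi2 X x ≃* Pi2 Y y :=
  { pmap (f : C(X, Y)) h with
    invFun := pmap (f.symm : C(Y, X)) (by simp [← h])
    left_inv := by
      intro γ
      exact (pmap_pmap (f : C(X, Y)) (f.symm : C(Y, X)) h (by simp [← h]) (by simp) γ).trans
        (pmap_id γ _ (by simp))
    right_inv := by
      intro γ
      exact (pmap_pmap (f.symm : C(Y, X)) (f : C(X, Y)) (by simp [← h]) h (by simp) γ).trans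
        (pmap_id γ _ (by simp)) }

theorem pequiv_apply {X Y : Type*} [TopologicalSpace X] [TopologicalSpace Y] (f : X ≃ₜ Y) {x : X}
    {y : Y} (h : f x = y) (γ : Pi2 X x) : pequiv f h γ = pmap (f : C(X, Y)) h γ := rfl

/-- Polar coordinates on a space `X`, together with a contraction of a meridian. -/
structure Polar (X : Type*) [TopologicalSpace X] (x₀ : X) where
  Q : ℝ → I → X
  cont : Continuous (fun v : ℝ × I => Q v.1 v.2)
  per : ∀ t s, Q (t + 1) s = Q t s
  bot : ∀ t, Q t 0 = Q 0 0
  top : ∀ t, Q t 1 = Q 0 1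
  H : C(I × X, X)
  H0 : ∀ x, H (0, x) = x
  Hx : ∀ u, H (u, x₀) = x₀
  HA : ∀ u s, ∃ s', H (u, Q 0 s) = Q 0 s'
  H1 : ∀ s, H (1, Q 0 s) = x₀

namespace Polar

variable {X : Type*} [TopologicalSpace X] {x₀ : X} (P : Polar X x₀)

theorem per_int (n : ℤ) (t : ℝ) (s : I) : P.Q (t + n) s = P.Q t s := by
  induction n using Int.induction_on with
  | zero => simp
  | succ i ih => rw [← ih]; push_cast; rw [← add_assoc, P.per]
  | pred i ih => rw [← ih, ← P.per]; push_cast; congr 1; ring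

theorem Q_int (n : ℤ) (s : I) : P.Q n s = P.Q 0 s := by
  simpa using P.per_int n 0 s

theorem bdry {φ : I → ℝ} (h0 : ∃ n : ℤ, φ 0 = n) (h1 : ∃ n : ℤ, φ 1 = n) (y : Fin 2 → I)
    (hy : y ∈ Cube.boundary (Fin 2)) : ∃ s, P.Q (φ (y 0)) (y 1) = P.Q 0 s := by
  obtain ⟨n, hn⟩ := h0
  obtain ⟨m, hm⟩ := h1
  obtain ⟨i, hi⟩ := hy
  fin_cases i
  · rcases hi with hi | hi
    · simp only [Fin.zero_eta] at hi
      rw [hi, hn, P.Q_int]; exact ⟨_, rfl⟩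
    · simp only [Fin.zero_eta] at hi
      rw [hi, hm, P.Q_int]; exact ⟨_, rfl⟩
  · rcases hi with hi | hi
    · simp only [Fin.mk_one] at hi
      rw [hi, P.bot]; exact ⟨_, rfl⟩
    · simp only [Fin.mk_one] at hi
      rw [hi, P.top]; exact ⟨_, rfl⟩

/-- The loop `w ∘ Q (φ t, s)`. -/
def loop (φ : C(I, ℝ)) (h0 : ∃ n : ℤ, φ 0 = n) (h1 : ∃ n : ℤ, φ 1 = n) :
    GenLoop (Fin 2) X x₀ :=
  ⟨⟨fun y => P.H (1, P.Q (φ (y 0)) (y 1)), P.H.continuous.comp (Continuous.prodMk (by fun_prop)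
    (P.cont.comp (f := fun y : Fin 2 → I => (φ (y 0), y 1)) (by fun_prop)))⟩, by
    intro y hy
    obtain ⟨s, hs⟩ := P.bdry h0 h1 y hy
    change P.H (1, P.Q (φ (y 0)) (y 1)) = x₀
    rw [hs, P.H1]⟩

theorem loop_apply (φ : C(I, ℝ)) (h0 : ∃ n : ℤ, φ 0 = n) (h1 : ∃ n : ℤ, φ 1 = n) (y) :
    P.loop φ h0 h1 y = P.H (1, P.Q (φ (y 0)) (y 1)) := rfl

theorem loop_eq (φ ψ : C(I, ℝ)) (h0 : ∃ n : ℤ, φ 0 = n) (h1 : ∃ n : ℤ, φ 1 = n)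
    (h0' : ∃ n : ℤ, ψ 0 = n) (h1' : ∃ n : ℤ, ψ 1 = n) (e0 : φ 0 = ψ 0) (e1 : φ 1 = ψ 1) :
    mk2 (P.loop φ h0 h1) = mk2 (P.loop ψ h0' h1') := by
  refine mk2_eq (fun v => P.H (1, P.Q ((1 - (v.1 : ℝ)) * φ (v.2 0) + v.1 * ψ (v.2 0)) (v.2 1)))
    ?_ ?_ ?_ ?_
  · exact P.H.continuous.comp (Continuous.prodMk (by fun_prop)
      (P.cont.comp (f := fun v : I × (Fin 2 → I) =>
        ((1 - (v.1 : ℝ)) * φ (v.2 0) + v.1 * ψ (v.2 0), v.2 1)) (by fun_prop)))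
  · intro y; simp [loop_apply]
  · intro y; simp [loop_apply]
  · intro u y hy
    obtain ⟨s, hs⟩ := P.bdry (φ := fun t => (1 - (u : ℝ)) * φ t + u * ψ t)
      (by obtain ⟨n, hn⟩ := h0; exact ⟨n, by rw [← e0, hn]; ring⟩)
      (by obtain ⟨n, hn⟩ := h1; exact ⟨n, by rw [← e1, hn]; ring⟩) y hy
    simp only at hs ⊢
    rw [hs, P.H1]

/-- The linear loop winding `d` times. -/
def lin (d : ℤ) : GenLoop (Fin 2) X x₀ :=
  P.loop ⟨fun t => d * (t : ℝ), by fun_prop⟩ ⟨0, by simp⟩ ⟨d, by simp⟩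

theorem lin_apply (d : ℤ) (y) : P.lin d y = P.H (1, P.Q (d * (y 0 : ℝ)) (y 1)) := rfl

theorem lin_zero : mk2 (P.lin 0) = 1 := by
  change _ = mk2 GenLoop.const
  congr 1
  ext y
  rw [lin_apply]
  simp [P.H1]

theorem lin_succ (d : ℤ) : mk2 (P.lin (d + 1)) = mk2 (P.lin 1) * mk2 (P.lin d) := by
  rw [mk2_mul]
  let φ : C(I, ℝ) := ⟨fun t => if (t : ℝ) ≤ 1 / 2 then d * (2 * (t : ℝ)) else d + (2 * t - 1), by
    refine Continuous.if_le (by fun_prop) (by fun_prop) (by fun_prop) (by fun_prop) ?_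
    intro t ht
    rw [ht]; ring⟩
  have f0 : φ 0 = (0 : ℤ) := by simp [φ]
  have f1 : φ 1 = (d + 1 : ℤ) := by
    simp only [φ, ContinuousMap.coe_mk]
    rw [if_neg (by norm_num)]
    push_cast
    norm_num
  have key : P.loop φ ⟨_, f0⟩ ⟨_, f1⟩ = GenLoop.transAt 0 (P.lin d) (P.lin 1) := by
    ext y
    rw [loop_apply]
    simp only [GenLoop.transAt, GenLoop.coe_copy, lin_apply, φ, ContinuousMap.coe_mk]
    split_ifs with h
    · congr 3
      rw [Function.update_self, Set.projIcc_of_mem]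
      exact ⟨by linarith [(y 0).2.1], by linarith⟩
    · rw [Function.update_self, Function.update_of_ne (by decide), Set.projIcc_of_mem zero_le_one
        (show (2 * (y 0 : ℝ) - 1) ∈ Set.Icc (0:ℝ) 1 from
          ⟨by linarith, by linarith [(y 0).2.2]⟩)]
      rw [add_comm, P.per_int]
      simp
  rw [← key]
  refine P.loop_eq _ _ _ _ _ _ ?_ ?_
  · rw [f0]; simp
  · rw [f1]; simp

theorem lin_pow (d : ℤ) : mk2 (P.lin d) = mk2 (P.lin 1) ^ d := by
  induction d using Int.induction_on with
  | zero => rw [P.lin_zero, zpow_zero]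
  | succ i ih => rw [lin_succ, ih, zpow_add, zpow_one, ← zpow_one_add, ← zpow_add_one, add_comm]
  | pred i ih =>
    have := P.lin_succ (-i - 1)
    rw [sub_add_cancel, ih] at this
    rw [← mul_right_inj (mk2 (P.lin 1)), ← this, ← zpow_one_add]
    congr 1; ring

/-- A map winding `d` times acts on the fundamental class as `d`-th power. -/
theorem pmap_lin (f : C(X, X)) (hx : f x₀ = x₀) (d : ℤ)
    (hf : ∀ t s, f (P.Q t s) = P.Q (d * t) s) :
    pmap f hx (mk2 (P.lin 1)) = mk2 (P.lin 1) ^ d := by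
  have hA : ∀ s, f (P.Q 0 s) = P.Q 0 s := fun s => by simpa using hf 0 s
  let w : C(X, X) := ⟨fun x => P.H (1, x), by fun_prop⟩
  have e1 : pmap f hx (mk2 (P.lin 1)) = pmap (w.comp f) (by simp [w, hx, P.Hx])
      (mk2 (P.lin 1)) := by
    refine pmap_homotopy _ _ _ _ ⟨fun v => P.H (v.1, f v.2), by fun_prop⟩ ?_ ?_ ?_ _
    · intro z; simp [P.H0]
    · intro z; simp [w]
    · intro u; simp [hx, P.Hx]
  rw [e1, ← lin_pow, pmap_mk]
  symm
  refine mk2_eq (fun v => P.H (1, f (P.H (v.1, P.Q (v.2 0) (v.2 1))))) ?_ ?_ ?_ ?_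
  · have : Continuous fun v : I × (Fin 2 → I) => P.Q (v.2 0) (v.2 1) :=
      P.cont.comp (f := fun v : I × (Fin 2 → I) => ((v.2 0 : ℝ), v.2 1)) (by fun_prop)
    fun_prop
  · intro y; simp only [P.H0, hf, lin_apply]
  · intro y; simp [lmap_apply, lin_apply, w]
  · intro u y hy
    obtain ⟨s, hs⟩ := P.bdry (φ := fun t => (t : ℝ)) ⟨0, by simp⟩ ⟨1, by simp⟩ y hy
    obtain ⟨s', hs'⟩ := P.HA u s
    simp only at hs ⊢
    rw [hs, hs', hA, P.H1]

/-- If the fundamental class vanishes then the whole group does. -/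
theorem trivial_of_lin [CompactSpace X] [T2Space X]
    (hsurj : ∀ x, ∃ t s : I, P.Q t s = x)
    (hinj : ∀ t s t' s' : I, P.Q t s = P.Q t' s' →
      (t = t' ∧ s = s') ∨ ((t = 0 ∨ t = 1 ∨ s = 0 ∨ s = 1) ∧ (t' = 0 ∨ t' = 1 ∨ s' = 0 ∨ s' = 1)))
    (h1 : mk2 (P.lin 1) = 1) (γ : Pi2 X x₀) : γ = 1 := by
  obtain ⟨p, rfl⟩ := mk2_surj γ
  let q : C(Fin 2 → I, X) := ⟨fun y => P.Q (y 0) (y 1),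
      P.cont.comp (f := fun v : (Fin 2 → I) => ((v 0 : ℝ), v 1)) (by fun_prop)⟩
  have hq : Function.Surjective q := by
    intro x
    obtain ⟨t, s, h⟩ := hsurj x
    exact ⟨![t, s], by simpa [q] using h⟩
  have hquot : Topology.IsQuotientMap q :=
    (q.continuous.isClosedMap).isQuotientMap q.continuous hq
  have hb : ∀ y : Fin 2 → I, (y 0 = 0 ∨ y 0 = 1 ∨ y 1 = 0 ∨ y 1 = 1) → p y = x₀ := by
    intro y hy
    refine p.2 y ?_
    rcases hy with h | h | h | h
    · exact ⟨0, Or.inl h⟩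
    · exact ⟨0, Or.inr h⟩
    · exact ⟨1, Or.inl h⟩
    · exact ⟨1, Or.inr h⟩
  have hfac : Function.FactorsThrough p q := by
    intro y z hyz
    rcases hinj _ _ _ _ hyz with ⟨h, h'⟩ | ⟨h, h'⟩
    · congr 1; ext i; fin_cases i <;> simp [h, h']
    · rw [hb y h, hb z h']
  let g : C(X, X) := hquot.lift p.1 hfac
  have hg : ∀ y, g (q y) = p y := fun y =>
    congrFun (congrArg DFunLike.coe (hquot.lift_comp p.1 hfac)) y
  have hgA : ∀ s, g (P.Q 0 s) = x₀ := by
    intro s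
    have := hg ![0, s]
    simp only [q, ContinuousMap.coe_mk, Matrix.cons_val_zero, Matrix.cons_val_one] at this
    rw [hb ![0, s] (by simp)] at this
    simpa using this
  have hgx : g x₀ = x₀ := by
    obtain ⟨s', hs'⟩ := P.HA 1 0
    rw [P.H1] at hs'
    exact (congrArg g hs').trans (hgA s')
  have : mk2 p = pmap g hgx (mk2 (P.lin 1)) := by
    rw [pmap_mk]
    refine mk2_eq (fun v => g (P.H (v.1, P.Q (v.2 0) (v.2 1)))) ?_ ?_ ?_ ?_
    · have : Continuous fun v : I × (Fin 2 → I) => P.Q (v.2 0) (v.2 1) :=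
        P.cont.comp (f := fun v : I × (Fin 2 → I) => ((v.2 0 : ℝ), v.2 1)) (by fun_prop)
      fun_prop
    · intro y; simp only [P.H0]; exact hg y
    · intro y; simp [lmap_apply, lin_apply]
    · intro u y hy
      obtain ⟨s, hs⟩ := P.bdry (φ := fun t => (t : ℝ)) ⟨0, by simp⟩ ⟨1, by simp⟩ y hy
      obtain ⟨s', hs'⟩ := P.HA u s
      simp only at hs ⊢
      rw [hs, hs', hgA]
  rw [this, h1, map_one]

end Polar
/-! ### The Riemann sphere -/

/-- The Riemann sphere. -/
abbrev RS : Type := OnePoint ℂ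

def Nm (x : RS) : ENNReal := x.elim ⊤ (fun z => ENNReal.ofReal ‖z‖)

theorem Nm_infty : Nm (OnePoint.infty) = ⊤ := rfl

theorem Nm_coe (z : ℂ) : Nm (z : RS) = ENNReal.ofReal ‖z‖ := rfl

theorem Nm_zero : Nm ((0 : ℂ) : RS) = 0 := by simp [Nm_coe]

theorem Nm_cont : Continuous Nm := by
  rw [OnePoint.continuous_iff]
  constructor
  · rw [Filter.coclosedCompact_eq_cocompact]
    exact ENNReal.tendsto_ofReal_atTop.comp tendsto_norm_cocompact_atTop
  · exact ENNReal.continuous_ofReal.comp continuous_norm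

theorem Nm_eq_top {x : RS} : Nm x = ⊤ ↔ x = OnePoint.infty := by
  induction x using OnePoint.rec with
  | infty => simp [Nm_infty]
  | coe z => simp [Nm_coe]

theorem Nm_eq_zero {x : RS} : Nm x = 0 ↔ x = ((0 : ℂ) : RS) := by
  induction x using OnePoint.rec with
  | infty => simp [Nm_infty]
  | coe z => simp [Nm_coe]

/-- The two poles. -/
def IsPole (x : RS) : Prop := x = OnePoint.infty ∨ x = ((0 : ℂ) : RS)

theorem tendsto_pole {T : Type*} {l : Filter T} {F : T → RS} {x : RS} (hx : IsPole x)
    (h : Filter.Tendsto (fun t => Nm (F t)) l (𝓝 (Nm x))) : Filter.Tendsto F l (𝓝 x) := by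
  have h1 : Nm ⁻¹' {Nm x} = {x} := by
    rcases hx with rfl | rfl
    · ext y; simp [Nm_infty, Nm_eq_top]
    · ext y; simp [Nm_zero, Nm_eq_zero]
  have h2 : Filter.comap Nm (𝓝 (Nm x)) = 𝓝 x := by
    rw [Nm_cont.isClosedMap.comap_nhds_eq Nm_cont, h1, nhdsSet_singleton]
  rw [← h2, Filter.tendsto_comap_iff]
  exact h

theorem not_pole {x : RS} (hx : ¬ IsPole x) : ∃ z : ℂ, z ≠ 0 ∧ x = (z : RS) := by
  induction x using OnePoint.rec with
  | infty => exact absurd (Or.inl rfl) hx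
  | coe z => exact ⟨z, fun h => hx (Or.inr (by rw [h])), rfl⟩

theorem contAt_prod {T Y : Type*} [TopologicalSpace T] [TopologicalSpace Y] {F : T × RS → Y}
    {u : T} {z : ℂ} (h : ContinuousAt (fun v : T × ℂ => F (v.1, (v.2 : RS))) (u, z)) :
    ContinuousAt F (u, (z : RS)) := by
  have := (Topology.IsOpenEmbedding.id (X := T)).prodMap (OnePoint.isOpenEmbedding_coe (X := ℂ))
  exact (this.continuousAt_iff (x := (u, z))).1 h

/-- Inversion. -/
def ivf (x : RS) : RS := x.elim ((0 : ℂ) : RS) 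
  (fun z => if z = 0 then OnePoint.infty else ((z⁻¹ : ℂ) : RS))

theorem ivf_infty : ivf OnePoint.infty = ((0 : ℂ) : RS) := rfl

theorem ivf_zero : ivf ((0 : ℂ) : RS) = OnePoint.infty := by simp [ivf]

theorem ivf_coe {z : ℂ} (hz : z ≠ 0) : ivf (z : RS) = ((z⁻¹ : ℂ) : RS) := by
  simp [ivf, hz]

theorem ivf_ivf (x : RS) : ivf (ivf x) = x := by
  by_cases hx : IsPole x
  · rcases hx with rfl | rfl
    · rw [ivf_infty, ivf_zero]
    · rw [ivf_zero, ivf_infty]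
  · obtain ⟨z, hz, rfl⟩ := not_pole hx
    rw [ivf_coe hz, ivf_coe (inv_ne_zero hz), inv_inv]

theorem Nm_ivf (x : RS) : Nm (ivf x) = (Nm x)⁻¹ := by
  by_cases hx : IsPole x
  · rcases hx with rfl | rfl
    · rw [ivf_infty, Nm_zero, Nm_infty]; simp
    · rw [ivf_zero, Nm_zero, Nm_infty]; simp
  · obtain ⟨z, hz, rfl⟩ := not_pole hx
    rw [ivf_coe hz, Nm_coe, Nm_coe, norm_inv, ENNReal.ofReal_inv_of_pos (by simpa using hz)]

theorem ivf_cont : Continuous ivf := by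
  rw [continuous_iff_continuousAt]
  intro x
  by_cases hx : IsPole x
  · refine tendsto_pole ?_ ?_
    · rcases hx with rfl | rfl
      · rw [ivf_infty]; exact Or.inr rfl
      · rw [ivf_zero]; exact Or.inl rfl
    · simp only [Nm_ivf]
      exact (continuous_inv.comp Nm_cont).continuousAt
  · obtain ⟨z, hz, rfl⟩ := not_pole hx
    rw [OnePoint.continuousAt_coe]
    have h1 : ContinuousAt (fun z : ℂ => ((z⁻¹ : ℂ) : RS)) z :=
      OnePoint.continuous_coe.continuousAt.comp (continuousAt_inv₀ hz)
    refine h1.congr ?_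
    filter_upwards [isOpen_ne.mem_nhds hz] with w hw
    exact (ivf_coe hw).symm

def iv : RS ≃ₜ RS where
  toFun := ivf
  invFun := ivf
  left_inv := ivf_ivf
  right_inv := ivf_ivf
  continuous_toFun := ivf_cont
  continuous_invFun := ivf_cont

/-- Affine maps. -/
def aff (a b : ℂ) (ha : a ≠ 0) : RS ≃ₜ RS :=
  ((Homeomorph.mulLeft₀ a ha).trans (Homeomorph.addRight b)).onePointCongr

theorem aff_infty (a b : ℂ) (ha : a ≠ 0) : aff a b ha OnePoint.infty = OnePoint.infty := rfl

theorem aff_coe (a b : ℂ) (ha : a ≠ 0) (z : ℂ) :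
    aff a b ha (z : RS) = ((a * z + b : ℂ) : RS) := rfl

/-- The Moebius map `z / (z + 1)`. -/
def mob : RS ≃ₜ RS := ((aff 1 1 one_ne_zero).trans iv).trans (aff (-1) 1 (by norm_num))

theorem mob_infty : mob OnePoint.infty = ((1 : ℂ) : RS) := by
  change aff (-1) 1 _ (ivf (aff 1 1 one_ne_zero OnePoint.infty)) = _
  rw [aff_infty, ivf_infty, aff_coe]; simp

theorem mob_coe {z : ℂ} (hz : z + 1 ≠ 0) : mob (z : RS) = ((z / (z + 1) : ℂ) : RS) := by
  change aff (-1) 1 _ (ivf (aff 1 1 _ (z : RS))) = _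
  rw [aff_coe, one_mul, ivf_coe hz, aff_coe]
  congr 1
  field_simp
  ring

/-- Contraction of the segment `[0,1]` to `c`. -/
def ctrf (c : ℝ) (v : I × RS) : RS :=
  v.2.elim OnePoint.infty
    (fun z => ((z + (v.1 : ℝ) * (c - (max 0 (min 1 z.re) : ℝ)) : ℂ) : RS))

theorem ctrf_infty (c : ℝ) (u : I) : ctrf c (u, OnePoint.infty) = OnePoint.infty := rfl

theorem ctrf_coe (c : ℝ) (u : I) (z : ℂ) : ctrf c (u, (z : RS)) =
    ((z + (u : ℝ) * (c - (max 0 (min 1 z.re) : ℝ)) : ℂ) : RS) := rfl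

theorem ctrf_cont (c : ℝ) (hc : c ∈ Set.Icc (0 : ℝ) 1) : Continuous (ctrf c) := by
  rw [continuous_iff_continuousAt]
  rintro ⟨u, x⟩
  induction x using OnePoint.rec with
  | infty =>
    refine tendsto_pole (Or.inl rfl) ?_
    rw [ctrf_infty, Nm_infty]
    have h1 : Filter.Tendsto (fun v : I × RS => Nm v.2 - 1) (𝓝 (u, OnePoint.infty)) (𝓝 ⊤) := by
      have : Filter.Tendsto (fun v : I × RS => Nm v.2) (𝓝 (u, OnePoint.infty)) (𝓝 ⊤) :=
        (Nm_cont.comp continuous_snd).tendsto _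
      have := ENNReal.Tendsto.sub this (tendsto_const_nhds (x := (1 : ENNReal)))
        (Or.inr ENNReal.one_ne_top)
      simpa using this
    refine tendsto_nhds_top_mono' h1 ?_
    rintro ⟨u, x⟩
    induction x using OnePoint.rec with
    | infty => simp [ctrf_infty, Nm_infty]
    | coe z =>
      simp only [ctrf_coe, Nm_coe]
      rw [tsub_le_iff_right, ← ENNReal.ofReal_one, ← ENNReal.ofReal_add (norm_nonneg _) zero_le_one]
      refine ENNReal.ofReal_le_ofReal ?_
      set m : ℝ := max 0 (min 1 z.re) with hm
      have hm0 : 0 ≤ m := le_max_left _ _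
      have hm1 : m ≤ 1 := max_le zero_le_one (min_le_left _ _)
      have h2 : ‖((u : ℝ) * (c - m : ℝ) : ℂ)‖ ≤ 1 := by
        rw [← Complex.ofReal_mul, Complex.norm_real, Real.norm_eq_abs, abs_mul]
        have : |(u : ℝ)| ≤ 1 := by rw [abs_of_nonneg u.2.1]; exact u.2.2
        have h3 : |c - m| ≤ 1 := by rw [abs_le]; constructor <;> linarith [hc.1, hc.2]
        nlinarith [abs_nonneg (u : ℝ), abs_nonneg (c - m)]
      calc ‖z‖ = ‖(z + (u : ℝ) * (c - m)) - ((u : ℝ) * (c - m : ℝ) : ℂ)‖ := by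
              congr 1; push_cast; ring
        _ ≤ _ := (norm_sub_le _ _).trans (by linarith)
  | coe z =>
    refine contAt_prod ?_
    simp only [ctrf_coe]
    refine OnePoint.continuous_coe.continuousAt.comp ?_
    refine Continuous.continuousAt ?_
    fun_prop

theorem ctrf_seg (c : ℝ) (u : I) (s : I) : ctrf c (u, ((s : ℝ) : ℂ)) =
    (((s + u * (c - s) : ℝ) : ℂ) : RS) := by
  rw [ctrf_coe]
  congr 1
  rw [Complex.ofReal_re, min_eq_right s.2.2, max_eq_right s.2.1]
  push_cast; ring

/-- Polar coordinates. -/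
def Qp (t : ℝ) (s : I) : RS :=
  if s = 1 then OnePoint.infty
  else (((s / (1 - s) : ℝ) * Complex.exp ((2 * Real.pi * t : ℝ) * Complex.I) : ℂ) : RS)

theorem Qp_one (t : ℝ) : Qp t 1 = OnePoint.infty := by simp [Qp]

theorem Qp_of_ne (t : ℝ) {s : I} (hs : s ≠ 1) : Qp t s =
    (((s / (1 - s) : ℝ) * Complex.exp ((2 * Real.pi * t : ℝ) * Complex.I) : ℂ) : RS) := by
  simp [Qp, hs]

theorem lt_one_of {s : I} (hs : s ≠ 1) : (s : ℝ) < 1 :=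
  lt_of_le_of_ne s.2.2 (fun h => hs (Subtype.ext h))

theorem Nm_Qp (t : ℝ) (s : I) :
    Nm (Qp t s) = ENNReal.ofReal s / ENNReal.ofReal (1 - s) := by
  by_cases hs : s = 1
  · subst hs; simp [Qp_one, Nm_infty]
  · have := lt_one_of hs
    rw [Qp_of_ne t hs, Nm_coe, norm_mul, Complex.norm_exp_ofReal_mul_I, mul_one, Complex.norm_real,
      Real.norm_eq_abs, abs_of_nonneg (div_nonneg s.2.1 (by linarith)),
      ENNReal.ofReal_div_of_pos (by linarith)]

theorem Qp_cont : Continuous (fun v : ℝ × I => Qp v.1 v.2) := by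
  rw [continuous_iff_continuousAt]
  rintro ⟨t, s⟩
  by_cases hs : s = 1
  · subst hs
    refine tendsto_pole (Or.inl (Qp_one t)) ?_
    simp only [Nm_Qp]
    refine ENNReal.Tendsto.div ?_ (Or.inl (by simp)) ?_ (Or.inr (by simp))
    · exact (ENNReal.continuous_ofReal.comp (by fun_prop)).tendsto _
    · exact (ENNReal.continuous_ofReal.comp
        (f := fun v : ℝ × I => 1 - (v.2 : ℝ)) (by fun_prop)).tendsto _
  · have h1 := lt_one_of hs
    have h2 : ContinuousAt (fun v : ℝ × I => (((v.2 / (1 - v.2) : ℝ) *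
        Complex.exp ((2 * Real.pi * v.1 : ℝ) * Complex.I) : ℂ) : RS)) (t, s) := by
      refine OnePoint.continuous_coe.continuousAt.comp ?_
      refine ContinuousAt.mul ?_ (Continuous.continuousAt (by fun_prop))
      refine Complex.continuous_ofReal.continuousAt.comp ?_
      refine ContinuousAt.div (Continuous.continuousAt (by fun_prop))
        (Continuous.continuousAt (by fun_prop)) ?_
      simp only; linarith
    refine h2.congr ?_
    have : ∀ᶠ v : ℝ × I in 𝓝 (t, s), v.2 ≠ 1 :=
      continuous_snd.continuousAt.eventually_ne hs
    filter_upwards [this] with v hv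
    exact (Qp_of_ne _ hv).symm

theorem mob_Qp (s : I) : mob (Qp 0 s) = (((s : ℝ) : ℂ) : RS) := by
  by_cases hs : s = 1
  · subst hs; rw [Qp_one, mob_infty]; simp
  · have h1 := lt_one_of hs
    have h3 : (1 - (s : ℝ)) ≠ 0 := by linarith
    have h4 : ((s / (1 - s) : ℝ) : ℂ) + 1 ≠ 0 := by
      rw [← Complex.ofReal_one, ← Complex.ofReal_add, Complex.ofReal_ne_zero]
      have := div_nonneg s.2.1 (by linarith : 0 ≤ 1 - (s : ℝ))
      linarith
    rw [Qp_of_ne _ hs]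
    simp only [mul_zero, Complex.ofReal_zero, zero_mul, Complex.exp_zero, mul_one]
    rw [mob_coe h4, ← Complex.ofReal_one, ← Complex.ofReal_add, ← Complex.ofReal_div]
    congr 2
    field_simp
    ring

def polar (x₀ : RS) (c : ℝ) (hc : c ∈ Set.Icc (0 : ℝ) 1) (hx : mob x₀ = (((c : ℝ) : ℂ) : RS)) :
    Polar RS x₀ where
  Q := Qp
  cont := Qp_cont
  per := by
    intro t s
    by_cases hs : s = 1
    · subst hs; rw [Qp_one, Qp_one]
    · rw [Qp_of_ne _ hs, Qp_of_ne _ hs]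
      congr 2
      rw [Complex.exp_eq_exp_iff_exists_int]
      exact ⟨1, by push_cast; ring⟩
  bot := by
    intro t
    rw [Qp_of_ne _ (by simp), Qp_of_ne _ (by simp)]
    simp
  top := by intro t; rw [Qp_one, Qp_one]
  H := ⟨fun v => mob.symm (ctrf c (v.1, mob v.2)),
    mob.symm.continuous.comp ((ctrf_cont c hc).comp (by fun_prop))⟩
  H0 := by
    intro x
    have : ctrf c (0, mob x) = mob x := by
      induction mob x using OnePoint.rec with
      | infty => rfl
      | coe z => rw [ctrf_coe]; simp
    simp [this]
  Hx := by
    intro u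
    have := ctrf_seg c u ⟨c, hc⟩
    simp only at this
    simp only [ContinuousMap.coe_mk, hx, this]
    rw [Homeomorph.symm_apply_eq, hx]
    simp
  HA := by
    intro u s
    have hs : (s + u * (c - s) : ℝ) ∈ Set.Icc (0 : ℝ) 1 := by
      have := (convex_Icc (0 : ℝ) 1) s.2 hc (by linarith [u.2.2] : 0 ≤ 1 - (u : ℝ)) u.2.1 (by ring)
      convert this using 1
      simp; ring
    refine ⟨⟨_, hs⟩, ?_⟩
    simp only [ContinuousMap.coe_mk]
    rw [Homeomorph.symm_apply_eq, mob_Qp, mob_Qp, ctrf_seg]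
  H1 := by
    intro s
    simp only [ContinuousMap.coe_mk]
    rw [Homeomorph.symm_apply_eq, mob_Qp, ctrf_seg, hx]
    simp

theorem polar_surj (x : RS) : ∃ t s : I, Qp t s = x := by
  induction x using OnePoint.rec with
  | infty => exact ⟨0, 1, Qp_one _⟩
  | coe z =>
    have h0 := norm_nonneg z
    have hpos : 0 < 1 + ‖z‖ := by linarith
    have hlt : ‖z‖ / (1 + ‖z‖) < 1 := by rw [div_lt_one hpos]; linarith
    refine ⟨⟨Int.fract (z.arg / (2 * Real.pi)), Int.fract_nonneg _, (Int.fract_lt_one _).le⟩,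
      ⟨‖z‖ / (1 + ‖z‖), by positivity, hlt.le⟩, ?_⟩
    rw [Qp_of_ne _ (fun h => hlt.ne (congrArg Subtype.val h))]
    congr 1
    have e1 : ‖z‖ / (1 + ‖z‖) / (1 - ‖z‖ / (1 + ‖z‖)) = ‖z‖ := by field_simp; ring
    have e2 : Complex.exp ((2 * Real.pi * Int.fract (z.arg / (2 * Real.pi)) : ℝ) * Complex.I) =
        Complex.exp (z.arg * Complex.I) := by
      rw [Complex.exp_eq_exp_iff_exists_int]
      refine ⟨-⌊z.arg / (2 * Real.pi)⌋, ?_⟩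
      have := Real.pi_ne_zero
      rw [Int.fract]
      have h5 : (2 * Real.pi * (z.arg / (2 * Real.pi) - ⌊z.arg / (2 * Real.pi)⌋) : ℝ) =
        z.arg - 2 * Real.pi * ⌊z.arg / (2 * Real.pi)⌋ := by field_simp
      rw [h5]
      push_cast; ring
    simp only
    rw [e1, e2, Complex.norm_mul_exp_arg_mul_I]

theorem polar_inj (t s t' s' : I) (h : Qp t s = Qp t' s') :
    (t = t' ∧ s = s') ∨ ((t = 0 ∨ t = 1 ∨ s = 0 ∨ s = 1) ∧
      (t' = 0 ∨ t' = 1 ∨ s' = 0 ∨ s' = 1)) := by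
  by_cases hs : s = 1
  · subst hs
    by_cases hs' : s' = 1
    · subst hs'; simp
    · rw [Qp_one, Qp_of_ne _ hs'] at h; simp at h
  by_cases hs' : s' = 1
  · subst hs'; rw [Qp_one, Qp_of_ne _ hs] at h; simp at h
  have h1 := lt_one_of hs
  have h1' := lt_one_of hs'
  rw [Qp_of_ne _ hs, Qp_of_ne _ hs', OnePoint.coe_eq_coe] at h
  have hn := congrArg norm h
  rw [norm_mul, norm_mul, Complex.norm_exp_ofReal_mul_I, Complex.norm_exp_ofReal_mul_I, mul_one,
    mul_one, Complex.norm_real, Complex.norm_real, Real.norm_eq_abs, Real.norm_eq_abs,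
    abs_of_nonneg (div_nonneg s.2.1 (by linarith)),
    abs_of_nonneg (div_nonneg s'.2.1 (by linarith)), div_eq_div_iff (by linarith) (by linarith)]
    at hn
  have hss : s = s' := Subtype.ext (by linarith)
  subst hss
  by_cases h0 : s = 0
  · subst h0; simp
  have h0' : (s : ℝ) ≠ 0 := fun h => h0 (Subtype.ext h)
  have hne : ((s / (1 - s) : ℝ) : ℂ) ≠ 0 := by
    rw [Complex.ofReal_ne_zero]
    exact div_ne_zero h0' (by linarith)
  have he := mul_left_cancel₀ hne h
  rw [Complex.exp_eq_exp_iff_exists_int] at he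
  obtain ⟨n, hn⟩ := he
  have hI : ((2 * Real.pi * t : ℝ) : ℂ) = ((2 * Real.pi * t' + n * (2 * Real.pi) : ℝ) : ℂ) := by
    apply mul_right_cancel₀ Complex.I_ne_zero
    rw [hn]; push_cast; ring
  have hR := Complex.ofReal_injective hI
  have hpi := Real.pi_pos
  have htn : (t : ℝ) = t' + n := by
    apply mul_left_cancel₀ (by positivity : (2 * Real.pi) ≠ 0)
    linarith
  have a1 := t.2.1
  have a2 := t.2.2
  have a3 := t'.2.1
  have a4 := t'.2.2
  have n1 : (n : ℝ) ≤ 1 := by linarith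
  have n2 : (-1 : ℝ) ≤ n := by linarith
  have n1' : n ≤ 1 := by exact_mod_cast n1
  have n2' : -1 ≤ n := by exact_mod_cast n2
  rcases (by omega : n = -1 ∨ n = 0 ∨ n = 1) with rfl | rfl | rfl
  · right
    push_cast at htn
    exact ⟨Or.inl (Subtype.ext (by change (t : ℝ) = 0; linarith)),
      Or.inr (Or.inl (Subtype.ext (by change (t' : ℝ) = 1; linarith)))⟩
  · left
    exact ⟨Subtype.ext (by simpa using htn), rfl⟩
  · right
    push_cast at htn
    exact ⟨Or.inr (Or.inl (Subtype.ext (by change (t : ℝ) = 1; linarith))),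
      Or.inl (Subtype.ext (by change (t' : ℝ) = 0; linarith))⟩
/-! ### Winding maps, logarithms, and the homotopy to the standard model -/

/-- `r e^{iθ} ↦ r e^{idθ}`. -/
def pdC (d : ℤ) (z : ℂ) : ℂ := ‖z‖ * (z / ‖z‖) ^ d

theorem pdC_zero (d : ℤ) : pdC d 0 = 0 := by simp [pdC]

theorem pdC_exp (d : ℤ) (w : ℂ) :
    pdC d (Complex.exp w) = Complex.exp (w.re + d * w.im * Complex.I) := by
  have h : Complex.exp w / (‖Complex.exp w‖ : ℝ) = Complex.exp (w.im * Complex.I) := by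
    rw [Complex.norm_exp, Complex.ofReal_exp, ← Complex.exp_sub]
    congr 1
    rw [sub_eq_iff_eq_add, add_comm]
    exact (Complex.re_add_im w).symm
  rw [pdC, h, Complex.norm_exp, Complex.ofReal_exp, ← Complex.exp_int_mul, ← Complex.exp_add]
  congr 1
  ring

theorem pdC_ne_zero (d : ℤ) {z : ℂ} (hz : z ≠ 0) : pdC d z ≠ 0 := by
  rw [← Complex.exp_log hz, pdC_exp]
  exact Complex.exp_ne_zero _

theorem norm_pdC (d : ℤ) (z : ℂ) : ‖pdC d z‖ = ‖z‖ := by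
  by_cases hz : z = 0
  · subst hz; simp [pdC_zero]
  · rw [← Complex.exp_log hz, pdC_exp, Complex.norm_exp, Complex.norm_exp]
    simp

theorem pdC_contAt (d : ℤ) {z : ℂ} (hz : z ≠ 0) : ContinuousAt (pdC d) z := by
  have hn : ((‖z‖ : ℝ) : ℂ) ≠ 0 := by simpa using hz
  unfold pdC
  refine ContinuousAt.mul (Continuous.continuousAt (by fun_prop)) ?_
  refine ContinuousAt.zpow₀ ?_ d (Or.inl (div_ne_zero hz hn))
  exact ContinuousAt.div continuousAt_id (Continuous.continuousAt (by fun_prop)) hn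

theorem pdC_one' (z : ℂ) : pdC 1 z = z := by
  by_cases hz : z = 0
  · subst hz; simp [pdC_zero]
  · rw [← Complex.exp_log hz, pdC_exp]
    congr 1
    push_cast
    rw [one_mul, Complex.re_add_im]

theorem pdC_at_one (d : ℤ) : pdC d 1 = 1 := by simp [pdC]

/-- Extend a map of `ℂ` to the Riemann sphere, fixing infinity. -/
def ext0 (φ : ℂ → ℂ) (x : RS) : RS := x.elim OnePoint.infty (fun z => ((φ z : ℂ) : RS))

theorem ext0_infty (φ : ℂ → ℂ) : ext0 φ OnePoint.infty = OnePoint.infty := rfl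

theorem ext0_coe (φ : ℂ → ℂ) (z : ℂ) : ext0 φ (z : RS) = ((φ z : ℂ) : RS) := rfl

theorem ext0_cont (φ : ℂ → ℂ) (h0 : φ 0 = 0) (hc : ∀ z ≠ 0, ContinuousAt φ z) (f : C(RS, RS))
    (f0 : f ((0 : ℂ) : RS) = ((0 : ℂ) : RS)) (fi : f OnePoint.infty = OnePoint.infty)
    (hf : ∀ z : ℂ, Nm (f (z : RS)) = ENNReal.ofReal ‖φ z‖) : Continuous (ext0 φ) := by
  have hN : ∀ x, Nm (ext0 φ x) = Nm (f x) := by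
    intro x
    induction x using OnePoint.rec with
    | infty => rw [ext0_infty, fi]
    | coe z => rw [ext0_coe, hf, Nm_coe]
  rw [continuous_iff_continuousAt]
  intro x
  by_cases hx : IsPole x
  · refine tendsto_pole ?_ ?_
    · rcases hx with rfl | rfl
      · exact Or.inl rfl
      · rw [ext0_coe, h0]; exact Or.inr rfl
    · simp only [hN]
      exact (Nm_cont.comp f.continuous).continuousAt
  · obtain ⟨z, hz, rfl⟩ := not_pole hx
    rw [OnePoint.continuousAt_coe]
    exact OnePoint.continuous_coe.continuousAt.comp (hc z hz)

def Pd (d : ℤ) : C(RS, RS) :=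
  ⟨ext0 (pdC d), ext0_cont _ (pdC_zero d) (fun _ hz => pdC_contAt d hz) (ContinuousMap.id _) rfl rfl
    (fun z => by rw [norm_pdC]; rfl)⟩

theorem Pd_coe (d : ℤ) (z : ℂ) : Pd d (z : RS) = ((pdC d z : ℂ) : RS) := rfl

theorem Pd_infty (d : ℤ) : Pd d OnePoint.infty = OnePoint.infty := rfl

theorem Pd_Qp (d : ℤ) (t : ℝ) (s : I) : Pd d (Qp t s) = Qp (d * t) s := by
  by_cases hs : s = 1
  · subst hs; rw [Qp_one, Qp_one, Pd_infty]
  · rw [Qp_of_ne _ hs, Qp_of_ne _ hs, Pd_coe]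
    congr 1
    have h1 := lt_one_of hs
    rcases eq_or_lt_of_le s.2.1 with h0 | h0
    · rw [← h0]; simp [pdC_zero]
    · have hr : 0 < (s / (1 - s) : ℝ) := div_pos h0 (by linarith)
      rw [← Real.exp_log hr, Complex.ofReal_exp, ← Complex.exp_add, pdC_exp, ← Complex.exp_add]
      congr 1
      simp
      ring

/-- Special base points. -/
def IsBase (x : RS) : Prop := IsPole x ∨ x = ((1 : ℂ) : RS)

def htp (d : ℤ) (G : ℂ → ℂ) (v : I × RS) : RS :=
  ext0 (fun z => pdC d z * Complex.exp ((1 - (v.1 : ℝ) : ℝ) * G z)) v.2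

theorem htp_cont (d : ℤ) (G : ℂ → ℂ) (hG : ∀ z ≠ 0, ContinuousAt G z) (f : C(RS, RS))
    (f0 : f ((0 : ℂ) : RS) = ((0 : ℂ) : RS)) (fi : f OnePoint.infty = OnePoint.infty)
    (hf : ∀ z : ℂ, z ≠ 0 → f (z : RS) = ((pdC d z * Complex.exp (G z) : ℂ) : RS)) :
    Continuous (htp d G) := by
  have hfix : ∀ x, IsPole x → f x = x := by
    rintro x (rfl | rfl)
    · exact fi
    · exact f0
  have hfix' : ∀ u x, IsPole x → htp d G (u, x) = x := by
    rintro u x (rfl | rfl)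
    · rfl
    · simp [htp, ext0_coe, pdC_zero]
  have key : ∀ v : I × RS, min (Nm v.2) (Nm (f v.2)) ≤ Nm (htp d G v) ∧
      Nm (htp d G v) ≤ max (Nm v.2) (Nm (f v.2)) := by
    rintro ⟨u, x⟩
    by_cases hx : IsPole x
    · rw [hfix' u x hx]; simp only [hfix x hx]; simp
    · obtain ⟨z, hz, rfl⟩ := not_pole hx
      rw [hf z hz]
      simp only [htp, ext0_coe, Nm_coe]
      rw [← ENNReal.ofReal_mono.map_min, ← ENNReal.ofReal_mono.map_max]
      rw [norm_mul, norm_mul, norm_pdC, Complex.norm_exp, Complex.norm_exp, Complex.re_ofReal_mul]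
      have hz' := norm_nonneg z
      have hu0 := u.2.1
      have hu1 := u.2.2
      constructor
      · refine ENNReal.ofReal_le_ofReal ?_
        rcases le_total 0 (G z).re with h | h
        · refine (min_le_left _ _).trans ?_
          have := Real.one_le_exp (mul_nonneg (by linarith : 0 ≤ 1 - (u : ℝ)) h)
          nlinarith
        · refine (min_le_right _ _).trans ?_
          gcongr
          nlinarith
      · refine ENNReal.ofReal_le_ofReal ?_
        rcases le_total 0 (G z).re with h | h
        · refine le_trans ?_ (le_max_right _ _)
          gcongr
          nlinarith
        · refine le_trans ?_ (le_max_left _ _)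
          have := Real.exp_le_one_iff.2 (mul_nonpos_of_nonneg_of_nonpos
            (by linarith : 0 ≤ 1 - (u : ℝ)) h)
          nlinarith
  rw [continuous_iff_continuousAt]
  rintro ⟨u, x⟩
  by_cases hx : IsPole x
  · refine tendsto_pole (by rw [hfix' u x hx]; exact hx) ?_
    rw [hfix' u x hx]
    have c1 : Continuous (fun v : I × RS => Nm v.2) := Nm_cont.comp continuous_snd
    have c2 : Continuous (fun v : I × RS => Nm (f v.2)) :=
      Nm_cont.comp (f.continuous.comp continuous_snd)
    have t1 := (c1.min c2).tendsto (u, x)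
    have t2 := (c1.max c2).tendsto (u, x)
    simp only [hfix x hx, min_self, max_self] at t1 t2
    exact tendsto_of_tendsto_of_tendsto_of_le_of_le t1 t2 (fun v => (key v).1) (fun v => (key v).2)
  · obtain ⟨z, hz, rfl⟩ := not_pole hx
    refine contAt_prod ?_
    simp only [htp, ext0_coe]
    refine OnePoint.continuous_coe.continuousAt.comp ?_
    have g1 : ContinuousAt (fun v : I × ℂ => G v.2) (u, z) :=
      ContinuousAt.comp (f := fun v : I × ℂ => v.2) (hG z hz) continuousAt_snd
    have g2 : ContinuousAt (fun v : I × ℂ => pdC d v.2) (u, z) :=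
      ContinuousAt.comp (f := fun v : I × ℂ => v.2) (pdC_contAt d hz) continuousAt_snd
    refine g2.mul (Complex.continuous_exp.continuousAt.comp ?_)
    exact ContinuousAt.mul (Continuous.continuousAt (by fun_prop)) g1

theorem Pd_base (d : ℤ) {x : RS} (hx : IsBase x) : Pd d x = x := by
  rcases hx with (rfl | rfl) | rfl
  · rfl
  · rw [Pd_coe, pdC_zero]
  · rw [Pd_coe, pdC_at_one]

theorem pmap_eq_Pd (d : ℤ) (G : ℂ → ℂ) (hG : ∀ z ≠ 0, ContinuousAt G z) (hG1 : G 1 = 0)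
    (f : C(RS, RS))
    (f0 : f ((0 : ℂ) : RS) = ((0 : ℂ) : RS)) (fi : f OnePoint.infty = OnePoint.infty)
    (hf : ∀ z : ℂ, z ≠ 0 → f (z : RS) = ((pdC d z * Complex.exp (G z) : ℂ) : RS))
    {x₀ : RS} (hx : IsBase x₀) (hfx : f x₀ = x₀) (γ : Pi2 RS x₀) :
    pmap f hfx γ = pmap (Pd d) (Pd_base d hx) γ := by
  refine pmap_homotopy _ _ _ _ ⟨htp d G, htp_cont d G hG f f0 fi hf⟩ ?_ ?_ ?_ γ
  · intro x
    by_cases hx : IsPole x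
    · rcases hx with rfl | rfl
      · rw [fi]; rfl
      · rw [f0]; simp [htp, ext0_coe, pdC_zero]
    · obtain ⟨z, hz, rfl⟩ := not_pole hx
      rw [hf z hz]
      simp [htp, ext0_coe]
  · intro x
    induction x using OnePoint.rec with
    | infty => rfl
    | coe z => rw [Pd_coe]; simp [htp, ext0_coe]
  · intro u
    rcases hx with (rfl | rfl) | rfl
    · rfl
    · simp [htp, ext0_coe, pdC_zero]
    · simp [htp, ext0_coe, pdC_at_one, hG1]

theorem exists_log (φ : ℂ → ℂ) (hc : Continuous φ) (hne : ∀ z ≠ 0, φ z ≠ 0) (h1 : φ 1 = 1) :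
    ∃ (d : ℤ) (G : ℂ → ℂ), (∀ z ≠ 0, ContinuousAt G z) ∧ G 1 = 0 ∧
      ∀ z ≠ 0, φ z = pdC d z * Complex.exp (G z) := by
  obtain ⟨L, ⟨L0, hL⟩, hLu⟩ := Complex.isCoveringMapOn_exp.existsUnique_continuousMap_lifts
    (⟨fun w => φ (Complex.exp w), by fun_prop⟩ : C(ℂ, ℂ)) (a₀ := 0) (e₀ := 0)
    (by simp [h1]) (by intro a; simpa using hne _ (Complex.exp_ne_zero a))
  have hL' : ∀ w, Complex.exp (L w) = φ (Complex.exp w) := fun w => congrFun hL w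
  obtain ⟨d, hd⟩ : ∃ d : ℤ, L (2 * Real.pi * Complex.I) = d * (2 * Real.pi * Complex.I) := by
    have : Complex.exp (L (2 * Real.pi * Complex.I)) = 1 := by
      rw [hL', Complex.exp_two_pi_mul_I, h1]
    rwa [Complex.exp_eq_one_iff] at this
  have hper : ∀ w, L (w + 2 * Real.pi * Complex.I) = L w + d * (2 * Real.pi * Complex.I) := by
    have := hLu ⟨fun w => L (w + 2 * Real.pi * Complex.I) - d * (2 * Real.pi * Complex.I),
      by fun_prop⟩ ⟨by simp [hd], by
        funext w
        simp only [Function.comp_apply, ContinuousMap.coe_mk]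
        rw [Complex.exp_sub, hL', Complex.exp_int_mul_two_pi_mul_I, div_one,
          Complex.exp_add, Complex.exp_two_pi_mul_I, mul_one]⟩
    intro w
    have := DFunLike.congr_fun this w
    simp only [ContinuousMap.coe_mk] at this
    rw [← this]; ring
  let E : ℂ → ℂ := fun w => L w - (w.re + d * w.im * Complex.I)
  have hE : Continuous E := by fun_prop
  have hEper : ∀ w, E (w + 2 * Real.pi * Complex.I) = E w := by
    intro w
    simp only [E, hper]
    simp
    ring
  have hEper' : ∀ (n : ℤ) w, E (w + n * (2 * Real.pi * Complex.I)) = E w := by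
    intro n w
    induction n using Int.induction_on with
    | zero => simp
    | succ i ih =>
      rw [← ih, ← hEper (w + ((i : ℤ) : ℂ) * (2 * Real.pi * Complex.I))]; congr 1; push_cast; ring
    | pred i ih =>
      rw [← ih, ← hEper]; congr 1; push_cast; ring
  have hGE : ∀ w, E (Complex.log (Complex.exp w)) = E w := by
    intro w
    have : Complex.exp (Complex.log (Complex.exp w)) = Complex.exp w :=
      Complex.exp_log (Complex.exp_ne_zero w)
    rw [Complex.exp_eq_exp_iff_exists_int] at this
    obtain ⟨n, hn⟩ := this
    rw [hn, hEper']
  refine ⟨d, fun z => E (Complex.log z), ?_, ?_, ?_⟩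
  · intro z₀ hz₀
    have h2 : ContinuousAt (fun z => E (Complex.log z₀ + Complex.log (z / z₀))) z₀ := by
      refine hE.continuousAt.comp (continuousAt_const.add ?_)
      refine ContinuousAt.clog (Continuous.continuousAt (by fun_prop)) ?_
      rw [div_self hz₀]; simp
    refine h2.congr ?_
    filter_upwards [isOpen_ne.mem_nhds hz₀] with z hz
    rw [← hGE, Complex.exp_add, Complex.exp_log hz₀, Complex.exp_log (div_ne_zero hz hz₀),
      mul_div_cancel₀ _ hz₀]
  · simp [E, L0]
  · intro z hz
    have := pdC_exp d (Complex.log z)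
    rw [Complex.exp_log hz] at this
    rw [this, ← Complex.exp_add]
    simp only [E]
    rw [add_sub_cancel, hL', Complex.exp_log hz]

/-- Loops missing a point are trivial. -/
theorem trivial_of_avoid_infty {x : RS} (p : GenLoop (Fin 2) RS x)
    (hp : ∀ y, p y ≠ OnePoint.infty) : mk2 p = 1 := by
  have hc : ∀ y, ∃ z : ℂ, (z : RS) = p y := fun y => OnePoint.ne_infty_iff_exists.1 (hp y)
  choose q hq using hc
  have hqc : Continuous q := by
    rw [OnePoint.isOpenEmbedding_coe.isInducing.continuous_iff]
    have : ((↑) : ℂ → RS) ∘ q = p := funext hq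
    rw [this]
    exact p.1.continuous
  obtain ⟨c, rfl⟩ : ∃ c : ℂ, (c : RS) = x := by
    have h := p.2 (fun _ => 0) ⟨0, Or.inl rfl⟩
    exact ⟨q (fun _ => 0), (hq _).trans h⟩
  change _ = mk2 GenLoop.const
  refine mk2_eq (fun v => (((1 - (v.1 : ℝ)) * q v.2 + (v.1 : ℝ) * c : ℂ) : RS)) ?_ ?_ ?_ ?_
  · exact OnePoint.continuous_coe.comp (by fun_prop)
  · intro y; simp [hq]
  · intro y; simp
  · intro u y hy
    have h : p y = c := p.2 y hy
    rw [← hq, OnePoint.coe_eq_coe] at h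
    simp only [h]
    congr 1
    ring

theorem trivial_of_avoid {x : RS} (g : C(RS, RS)) (hg : g x = x) (z : ℂ)
    (hz : ∀ y, g y ≠ (z : RS)) (γ : Pi2 RS x) : pmap g hg γ = 1 := by
  let N : RS ≃ₜ RS := (aff 1 (-z) one_ne_zero).trans iv
  have hN : N (z : RS) = OnePoint.infty := by
    change ivf (aff 1 (-z) one_ne_zero (z : RS)) = _
    rw [aff_coe, one_mul, add_neg_cancel, ivf_zero]
  obtain ⟨p, rfl⟩ := mk2_surj γ
  apply (pequiv N rfl).injective
  rw [map_one, pequiv_apply, pmap_mk, pmap_mk]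
  apply trivial_of_avoid_infty
  intro y
  rw [lmap_apply, lmap_apply]
  intro h
  exact hz (p y) (N.injective (h.trans hN.symm))

theorem exists_polar {x₀ : RS} (hx : IsBase x₀) : ∃ P : Polar RS x₀, P.Q = Qp := by
  rcases hx with (rfl | rfl) | rfl
  · exact ⟨polar _ 1 (by simp) (by rw [mob_infty]; simp), rfl⟩
  · exact ⟨polar _ 0 (by simp) (by rw [mob_coe (by simp)]; simp), rfl⟩
  · exact ⟨polar _ (1 / 2) ⟨by norm_num, by norm_num⟩
      (by rw [mob_coe (by norm_num)]; congr 1; push_cast; norm_num), rfl⟩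

theorem natAbs_eq_of_degree {A : Type*} [Group A] (E E' : A ≃* Multiplicative ℤ) (c : A)
    (hc : c ≠ 1) (d k : ℤ) (h : E' (c ^ d) = E c ^ k) : d.natAbs = k.natAbs := by
  let a := Multiplicative.toAdd (E c)
  let T : ℤ ≃+ ℤ := MulEquiv.toAdditive (E.symm.trans E')
  have hT : ∀ n, T n = n * T 1 := by
    intro n
    have := map_zsmul T n 1
    simpa using this
  have hT1 : IsUnit (T 1) := by
    obtain ⟨m, hm⟩ := T.surjective 1
    rw [hT] at hm
    exact IsUnit.of_mul_eq_one m (by rw [mul_comm]; exact hm)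
  have ha : a ≠ 0 := by
    intro h0
    apply hc
    apply E.injective
    rw [map_one]
    exact h0
  have hE' : Multiplicative.toAdd (E' c) = a * T 1 := by
    rw [← hT]
    change _ = Multiplicative.toAdd (E' (E.symm (E c)))
    simp
  have h2 : d * (a * T 1) = k * a := by
    rw [← hE']
    have := congrArg Multiplicative.toAdd h
    rw [map_zpow, toAdd_zpow, toAdd_zpow] at this
    simpa using this
  have h3 := congrArg Int.natAbs h2
  rw [Int.natAbs_mul, Int.natAbs_mul, Int.natAbs_mul, Int.isUnit_iff_natAbs_eq.1 hT1, mul_one] at h3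
  exact Nat.eq_of_mul_eq_mul_right (Int.natAbs_pos.2 ha) h3

theorem RS_main (f : C(RS, RS)) (fi : ∀ x, f x = OnePoint.infty ↔ x = OnePoint.infty)
    (f0 : ∀ x, f x = ((0 : ℂ) : RS) ↔ x = ((0 : ℂ) : RS))
    (f1 : f ((1 : ℂ) : RS) = ((1 : ℂ) : RS)) {x₀ : RS} (hx : IsBase x₀) (hfx : f x₀ = x₀)
    (E E' : Pi2 RS x₀ ≃* Multiplicative ℤ) (k : ℕ) (hk : k ≠ 0)
    (hE : ∀ γ, E' (pmap f hfx γ) = E γ ^ (k : ℤ)) (q : ℂ) (hq : q ≠ 0) :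
    (k : ℕ∞) ≤ (f ⁻¹' {(q : RS)}).encard := by
  have hfi := (fi _).2 rfl
  have hf0 := (f0 _).2 rfl
  have hφ : ∀ z : ℂ, ∃ w : ℂ, (w : RS) = f (z : RS) := fun z =>
    OnePoint.ne_infty_iff_exists.1 (fun h => OnePoint.coe_ne_infty z ((fi _).1 h))
  choose φ hφ using hφ
  have φc : Continuous φ := by
    rw [OnePoint.isOpenEmbedding_coe.isInducing.continuous_iff]
    have : ((↑) : ℂ → RS) ∘ φ = f ∘ ((↑) : ℂ → RS) := funext hφ
    rw [this]
    exact f.continuous.comp OnePoint.continuous_coe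
  have φne : ∀ z ≠ 0, φ z ≠ 0 := by
    intro z hz h
    have := hφ z
    rw [h] at this
    exact hz (OnePoint.coe_injective ((f0 _).1 this.symm))
  have φ1 : φ 1 = 1 := OnePoint.coe_injective ((hφ 1).trans f1)
  obtain ⟨d, G, hG, hG1, hφG⟩ := exists_log φ φc φne φ1
  have hf : ∀ z : ℂ, z ≠ 0 → f (z : RS) = ((pdC d z * Complex.exp (G z) : ℂ) : RS) := by
    intro z hz
    rw [← hφ, hφG z hz]
  obtain ⟨P, hP⟩ := exists_polar hx
  set c := mk2 (P.lin 1) with hc_def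
  have hc : c ≠ 1 := by
    intro h
    have htriv : ∀ γ : Pi2 RS x₀, γ = 1 := P.trivial_of_lin (by rw [hP]; exact polar_surj)
      (by rw [hP]; exact polar_inj) h
    have h2 := congrArg E (htriv (E.symm (Multiplicative.ofAdd (1 : ℤ))))
    rw [MulEquiv.apply_symm_apply] at h2
    have h3 : E 1 = 1 := map_one E
    rw [h3] at h2
    exact one_ne_zero (α := ℤ) (congrArg Multiplicative.toAdd h2)
  have hfc : pmap f hfx c = c ^ d := by
    rw [pmap_eq_Pd d G hG hG1 f hf0 hfi hf hx hfx]
    exact P.pmap_lin (Pd d) (Pd_base d hx) d (by rw [hP]; exact Pd_Qp d)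
  have hdk : d.natAbs = k := by
    have := natAbs_eq_of_degree E E' c hc d k (by rw [← hfc, hE])
    simpa using this
  have hd0 : d ≠ 0 := by
    rintro rfl; simp at hdk; exact hk hdk.symm
  have hd0' : (d : ℂ) ≠ 0 := by exact_mod_cast hd0
  -- the root of `f`
  let G' : ℂ → ℂ := fun z => (G z).re + ((G z).im / d : ℂ) * Complex.I
  have hG' : ∀ z ≠ 0, ContinuousAt G' z := by
    intro z hz
    have := hG z hz
    have h1 : Continuous fun w : ℂ => (w.re + (w.im / d : ℂ) * Complex.I : ℂ) := by fun_prop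
    exact h1.continuousAt.comp this
  have hG'1 : G' 1 = 0 := by simp [G', hG1]
  have hG're : ∀ z, (G' z).re = (G z).re := by
    intro z
    have : G' z = (((G z).re : ℝ) : ℂ) + (((G z).im / d : ℝ) : ℂ) * Complex.I := by
      simp [G']
    rw [this]; simp
  have hG'im : ∀ z, (G' z).im = (G z).im / d := by
    intro z
    have : G' z = (((G z).re : ℝ) : ℂ) + (((G z).im / d : ℝ) : ℂ) * Complex.I := by
      simp [G']
    rw [this]; simp
  let g : C(RS, RS) := ⟨ext0 (fun z => z * Complex.exp (G' z)), ext0_cont _ (by simp)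
    (fun z hz => continuousAt_id.mul (Complex.continuous_exp.continuousAt.comp (hG' z hz))) f hf0 hfi
    (by
      intro z
      by_cases hz : z = 0
      · subst hz; rw [hf0, Nm_zero]; simp
      · rw [hf z hz, Nm_coe, norm_mul, norm_mul, norm_pdC, Complex.norm_exp, Complex.norm_exp,
          hG're])⟩
  have g_coe : ∀ z : ℂ, g (z : RS) = ((z * Complex.exp (G' z) : ℂ) : RS) := fun z => rfl
  have g_inf : g OnePoint.infty = OnePoint.infty := rfl
  have g_zero : g ((0 : ℂ) : RS) = ((0 : ℂ) : RS) := by rw [g_coe]; simp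
  have hgx : g x₀ = x₀ := by
    rcases hx with (rfl | rfl) | rfl
    · rfl
    · exact g_zero
    · rw [g_coe, hG'1]; simp
  have hPg : ∀ x, Pd d (g x) = f x := by
    intro x
    by_cases hx : IsPole x
    · rcases hx with rfl | rfl
      · rw [g_inf, hfi, Pd_infty]
      · rw [g_zero, hf0, Pd_coe, pdC_zero]
    · obtain ⟨z, hz, rfl⟩ := not_pole hx
      rw [g_coe, hf z hz, Pd_coe]
      congr 1
      have e1 : z = Complex.exp (Complex.log z) := (Complex.exp_log hz).symm
      have e2 : pdC d z = pdC d (Complex.exp (Complex.log z)) := by rw [← e1]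
      have e3 : z * Complex.exp (G' z) = Complex.exp (Complex.log z + G' z) := by
        rw [Complex.exp_add (Complex.log z) (G' z), Complex.exp_log hz]
      rw [e2, e3, pdC_exp, pdC_exp, ← Complex.exp_add]
      congr 1
      rw [Complex.add_re, Complex.add_im, hG're, hG'im]
      conv_rhs => rw [← Complex.re_add_im (G z)]
      push_cast
      field_simp
      ring
  have gsurj : ∀ z : ℂ, ∃ x, g x = (z : RS) := by
    intro z
    by_contra! hz
    apply hc
    have h1 := trivial_of_avoid g hgx z hz c
    rw [pmap_eq_Pd 1 G' hG' hG'1 g g_zero g_inf (fun z hz => by rw [g_coe, pdC_one']) hx hgx] at h1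
    rw [← h1]
    symm
    apply pmap_id
    intro x
    induction x using OnePoint.rec with
    | infty => rfl
    | coe z => rw [Pd_coe, pdC_one']
  -- the `d`-th roots of `q`
  let y : ℕ → ℂ := fun j =>
    Complex.exp ((Real.log ‖q‖ : ℝ) + (((q.arg + 2 * Real.pi * j) / d : ℝ) : ℂ) * Complex.I)
  have hy : ∀ j, pdC d (y j) = q := by
    intro j
    simp only [y]
    rw [pdC_exp]
    conv_rhs => rw [← Complex.exp_log hq]
    rw [Complex.exp_eq_exp_iff_exists_int]
    refine ⟨j, ?_⟩
    conv_rhs => rw [← Complex.re_add_im (Complex.log q), Complex.log_re, Complex.log_im]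
    simp
    field_simp
    ring
  choose x hxy using fun j => gsurj (y j)
  have hyinj : ∀ i < k, ∀ j < k, y i = y j → i = j := by
    intro i hi j hj h
    simp only [y] at h
    rw [Complex.exp_eq_exp_iff_exists_int] at h
    obtain ⟨n, hn⟩ := h
    have him := congrArg Complex.im hn
    simp at him
    have hpi := Real.pi_pos
    have hdR : (d : ℝ) ≠ 0 := by exact_mod_cast hd0
    field_simp at him
    have h5 : (i : ℝ) - j = d * n := by
      have : (2 * Real.pi) * ((i : ℝ) - j) = (2 * Real.pi) * (d * n) := by linarith
      exact mul_left_cancel₀ (by positivity) this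
    have h6 : (i : ℤ) - j = d * n := by exact_mod_cast h5
    have h7 : (d : ℤ) ∣ (i : ℤ) - j := ⟨n, h6⟩
    have h8 : (i : ℤ) - j = 0 := by
      apply Int.eq_zero_of_abs_lt_dvd (Int.natAbs_dvd.2 h7)
      rw [hdk, abs_lt]
      constructor <;> omega
    omega
  have hsub : (fun j => x j) '' (Finset.range k : Set ℕ) ⊆ f ⁻¹' {(q : RS)} := by
    rintro _ ⟨j, -, rfl⟩
    change f (x j) = q
    rw [← hPg, hxy, Pd_coe, hy]
  have hinj : Set.InjOn (fun j => x j) (Finset.range k : Set ℕ) := by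
    intro i hi j hj h
    refine hyinj i (by simpa using hi) j (by simpa using hj) ?_
    apply OnePoint.coe_injective
    rw [← hxy, ← hxy]
    exact congrArg g h
  calc (k : ℕ∞) = ((fun j => x j) '' (Finset.range k : Set ℕ)).encard := by
        rw [hinj.encard_image, Set.encard_coe_eq_coe_finsetCard, Finset.card_range]
    _ ≤ _ := Set.encard_le_encard hsub

/-! ### Choosing coordinates -/

theorem coords_RS (x y z : RS) (hxy : x ≠ y) (hxz : x ≠ z) (hyz : y ≠ z) :
    ∃ m : RS ≃ₜ RS, m ((0 : ℂ) : RS) = x ∧ m OnePoint.infty = y ∧ m ((1 : ℂ) : RS) = z := by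
  have key : ∀ x z : RS, x ≠ OnePoint.infty → z ≠ OnePoint.infty → x ≠ z →
      ∃ m : RS ≃ₜ RS, m ((0 : ℂ) : RS) = x ∧ m OnePoint.infty = OnePoint.infty ∧
        m ((1 : ℂ) : RS) = z := by
    intro x z hx hz hxz
    obtain ⟨a, rfl⟩ := OnePoint.ne_infty_iff_exists.1 hx
    obtain ⟨b, rfl⟩ := OnePoint.ne_infty_iff_exists.1 hz
    have hab : b - a ≠ 0 := fun h => hxz (by rw [sub_eq_zero.1 h])
    refine ⟨aff (b - a) a hab, ?_, rfl, ?_⟩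
    · rw [aff_coe]; simp
    · rw [aff_coe]; simp
  induction y using OnePoint.rec with
  | infty => exact key x z hxy hyz.symm hxz
  | coe w =>
    let N : RS ≃ₜ RS := (aff 1 (-w) one_ne_zero).trans iv
    have hN : N (w : RS) = OnePoint.infty := by
      change ivf (aff 1 (-w) one_ne_zero (w : RS)) = _
      rw [aff_coe, one_mul, add_neg_cancel, ivf_zero]
    obtain ⟨m, h0, hi, h1⟩ := key (N x) (N z) (by rw [← hN]; simpa using hxy)
      (by rw [← hN]; simpa using hyz.symm) (by simpa using hxz)
    refine ⟨m.trans N.symm, ?_, ?_, ?_⟩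
    · simp [h0]
    · change N.symm (m OnePoint.infty) = _
      rw [hi, Homeomorph.symm_apply_eq, hN]
    · simp [h1]

theorem sphere_homeo : Nonempty (RS ≃ₜ Sphere2) :=
  ⟨onePointEquivSphereOfFinrankEq (by simp)⟩

theorem coords (x y z : Sphere2) (hxy : x ≠ y) (hxz : x ≠ z) (hyz : y ≠ z) :
    ∃ m : RS ≃ₜ Sphere2, m ((0 : ℂ) : RS) = x ∧ m OnePoint.infty = y ∧ m ((1 : ℂ) : RS) = z := by
  obtain ⟨β⟩ := sphere_homeo
  obtain ⟨m, h0, hi, h1⟩ := coords_RS (β.symm x) (β.symm y) (β.symm z) (by simpa using hxy)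
    (by simpa using hxz) (by simpa using hyz)
  exact ⟨m.trans β, by simp [h0], by simp [hi], by simp [h1]⟩

theorem exists_third (x y b : Sphere2) :
    ∃ z, x ≠ z ∧ y ≠ z ∧ (b = x ∨ b = y ∨ b = z) := by
  by_cases h : b = x ∨ b = y
  · obtain ⟨β⟩ := sphere_homeo
    have : Infinite Sphere2 := Infinite.of_injective (fun z : ℂ => β (z : RS))
      (β.injective.comp OnePoint.coe_injective)
    obtain ⟨z, hz⟩ := Infinite.exists_notMem_finset ({x, y} : Finset Sphere2)
    simp only [Finset.mem_insert, Finset.mem_singleton, not_or] at hz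
    exact ⟨z, Ne.symm hz.1, Ne.symm hz.2, by tauto⟩
  · push Not at h
    exact ⟨b, h.1.symm, h.2.symm, by simp⟩

theorem main_fibers (ρ : C(Sphere2, Sphere2)) (k : ℕ)
    (hk : k ≠ 0) (hdeg : HasDegree ρ (k : ℤ))
    (p₁ p₂ : Sphere2) (hne : p₁ ≠ p₂)
    (h₁ : ∃ a, ρ ⁻¹' {p₁} = {a}) (h₂ : ∃ a, ρ ⁻¹' {p₂} = {a}) (q : Sphere2) (hq1 : q ≠ p₁)
    (hq2 : q ≠ p₂) : (k : ℕ∞) ≤ (ρ ⁻¹' {q}).encard := by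
  obtain ⟨a₁, ha₁⟩ := h₁
  obtain ⟨a₂, ha₂⟩ := h₂
  have k₁ : ∀ x, ρ x = p₁ ↔ x = a₁ := fun x => by simpa using Set.ext_iff.1 ha₁ x
  have k₂ : ∀ x, ρ x = p₂ ↔ x = a₂ := fun x => by simpa using Set.ext_iff.1 ha₂ x
  have e₁ := (k₁ a₁).2 rfl
  have e₂ := (k₂ a₂).2 rfl
  obtain ⟨b, e, e', he⟩ := hdeg
  have ha : a₁ ≠ a₂ := by
    rintro rfl; exact hne (e₁.symm.trans e₂)
  obtain ⟨a₃, h13, h23, hb⟩ := exists_third a₁ a₂ b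
  have hp13 : p₁ ≠ ρ a₃ := fun h => h13 ((k₁ _).1 h.symm).symm
  have hp23 : p₂ ≠ ρ a₃ := fun h => h23 ((k₂ _).1 h.symm).symm
  obtain ⟨α, α0, αi, α1⟩ := coords a₁ a₂ a₃ ha h13 h23
  obtain ⟨β, β0, βi, β1⟩ := coords p₁ p₂ (ρ a₃) hne hp13 hp23
  let f : C(RS, RS) := ((β.symm : C(Sphere2, RS)).comp ρ).comp (α : C(RS, Sphere2))
  have hf : ∀ x, f x = β.symm (ρ (α x)) := fun x => rfl
  have hβf : ∀ x, β (f x) = ρ (α x) := fun x => by rw [hf]; simp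
  have fi : ∀ x, f x = OnePoint.infty ↔ x = OnePoint.infty := by
    intro x
    rw [hf, Homeomorph.symm_apply_eq, βi, k₂, ← αi, α.injective.eq_iff]
  have f0 : ∀ x, f x = ((0 : ℂ) : RS) ↔ x = ((0 : ℂ) : RS) := by
    intro x
    rw [hf, Homeomorph.symm_apply_eq, β0, k₁, ← α0, α.injective.eq_iff]
  have f1 : f ((1 : ℂ) : RS) = ((1 : ℂ) : RS) := by
    rw [hf, Homeomorph.symm_apply_eq, α1, β1]
  obtain ⟨x₀, hx₀, hαx⟩ : ∃ x₀, IsBase x₀ ∧ α x₀ = b := by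
    rcases hb with rfl | rfl | rfl
    · exact ⟨_, Or.inl (Or.inr rfl), α0⟩
    · exact ⟨_, Or.inl (Or.inl rfl), αi⟩
    · exact ⟨_, Or.inr rfl, α1⟩
  have hfx : f x₀ = x₀ := by
    rcases hx₀ with (rfl | rfl) | rfl
    · exact (fi _).2 rfl
    · exact (f0 _).2 rfl
    · exact f1
  have hβx : β x₀ = ρ b := by rw [← hfx, hβf, hαx]
  have hE : ∀ γ : Pi2 RS x₀, ((pequiv β hβx).trans e') (pmap f hfx γ) =
      ((pequiv α hαx).trans e) γ ^ (k : ℤ) := by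
    intro γ
    change e' (pmap (β : C(RS, Sphere2)) hβx (pmap f hfx γ)) =
      e (pmap (α : C(RS, Sphere2)) hαx γ) ^ (k : ℤ)
    rw [← he]
    congr 1
    obtain ⟨p, rfl⟩ := mk2_surj γ
    change mk2 _ = mk2 (lmap ρ rfl (lmap (α : C(RS, Sphere2)) hαx p))
    congr 1
    ext1 y
    exact hβf (p y)
  have hq : ¬ IsPole (β.symm q) := by
    rintro (h | h)
    · rw [Homeomorph.symm_apply_eq, βi] at h; exact hq2 h
    · rw [Homeomorph.symm_apply_eq, β0] at h; exact hq1 h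
  obtain ⟨z, hz, hzq⟩ := not_pole hq
  have := RS_main f fi f0 f1 hx₀ hfx _ _ k hk hE z hz
  refine this.trans ?_
  rw [← α.injective.encard_image]
  apply Set.encard_le_encard
  rintro _ ⟨x, hx, rfl⟩
  change f x = z at hx
  change ρ (α x) = q
  rw [← hβf, hx, ← hzq]
  simp

/-- Let `ρ : S² → S²` be a continuous map of degree `k ≥ 2`.  If there are two
distinct points `p₁ ≠ p₂` whose fibers are singletons, then every other point has a
fiber with at least `k` elements; in particular the set of points with singleton
fiber has at most two elements. -/
theorem singleton_fibers (ρ : C(Sphere2, Sphere2)) (k : ℕ)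
    (hk : 2 ≤ k) (hdeg : HasDegree ρ (k : ℤ))
    (p₁ p₂ : Sphere2) (hne : p₁ ≠ p₂)
    (h₁ : ∃ a, ρ ⁻¹' {p₁} = {a}) (h₂ : ∃ a, ρ ⁻¹' {p₂} = {a}) :
    (∀ q : Sphere2, q ≠ p₁ → q ≠ p₂ → (k : ℕ∞) ≤ (ρ ⁻¹' {q}).encard) ∧
      {p : Sphere2 | ∃ a, ρ ⁻¹' {p} = {a}}.encard ≤ 2 := by
  have hA := main_fibers ρ k (by omega) hdeg p₁ p₂ hne h₁ h₂
  refine ⟨hA, ?_⟩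
  have hsub : {p : Sphere2 | ∃ a, ρ ⁻¹' {p} = {a}} ⊆ {p₁, p₂} := by
    rintro p ⟨a, ha⟩
    by_contra hp
    simp only [Set.mem_insert_iff, Set.mem_singleton_iff, not_or] at hp
    have h3 := hA p hp.1 hp.2
    rw [ha, Set.encard_singleton] at h3
    have h4 : k ≤ 1 := by exact_mod_cast h3
    omega
  exact (Set.encard_le_encard hsub).trans (Set.encard_pair hne).le
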